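/- Let A, B be nonzero real numbers and α, β ∈ ℝ, and let p, q be coprime integers with A·q = B·p (i.e., A/B = p/q). If p and q are both odd, then as T → ∞, (1/T)·∫₀ᵀ Φ(A·t − α, B·t − β) dt converges to (−1)^{(p+q)/2 + 1} · (8/(π² p q)) · Σ_{ℓ=0}^{∞} cos(2π(2ℓ+1)(pβ − qα)) / (2ℓ+1)², where Φ(u,v) = sgn(cos(2πu)·cos(2πv)). -/

import Mathlib

open Filter Real MeasureTheory

noncomputable def sgn (t : ℝ) : ℝ := if 0 < t then 1 else if t < 0 then -1 else 0

noncomputable def Φ (u v : ℝ) : ℝ := sgn (Real.cos (2 * π * u) * Real.cos (2 * π * v))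

open scoped ComplexConjugate

/-- Parseval's identity on the unit interval. -/
lemma hasSum_conj_fourierIntegral_mul (g h : ℝ → ℂ)
    (hg : MemLp g 2 (volume.restrict (Set.Ioc 0 1)))
    (hh : MemLp h 2 (volume.restrict (Set.Ioc 0 1))) :
    HasSum (fun n : ℤ =>
      conj (∫ x in (0:ℝ)..1, Complex.exp (-(2 * π * Complex.I * n * x)) * g x) *
        ∫ x in (0:ℝ)..1, Complex.exp (-(2 * π * Complex.I * n * x)) * h x)
      (∫ x in (0:ℝ)..1, conj (g x) * h x) := by
  have key : ∀ f : ℝ → ℂ, MemLp f 2 (volume.restrict (Set.Ioc 0 1)) →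
      MemLp (AddCircle.liftIoc (1:ℝ) 0 f) 2 (AddCircle.haarAddCircle (T := (1:ℝ))) := by
    intro f hf
    exact (MemLp.memLp_liftIoc (by simpa using hf)).haarAddCircle
  have coeff : ∀ (f : ℝ → ℂ) (n : ℤ), fourierCoeff (AddCircle.liftIoc (1:ℝ) 0 f) n =
      ∫ x in (0:ℝ)..1, Complex.exp (-(2 * π * Complex.I * n * x)) * f x := by
    intro f n
    rw [fourierCoeff_liftIoc_eq, fourierCoeffOn_eq_integral]
    simp [fourier_coe_apply, -fourier_apply]
  have H := (fourierBasis (T := (1:ℝ))).hasSum_inner_mul_inner ((key g hg).toLp) ((key h hh).toLp)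
  convert! H using 1
  · ext n
    rw [← inner_conj_symm, ← HilbertBasis.repr_apply_apply, ← HilbertBasis.repr_apply_apply,
      fourierBasis_repr, fourierBasis_repr, fourierCoeff_congr_ae (key g hg).coeFn_toLp,
      fourierCoeff_congr_ae (key h hh).coeFn_toLp, coeff, coeff]
  · rw [L2.inner_def]
    trans fourierCoeff (AddCircle.liftIoc (1:ℝ) 0 (fun x => conj (g x) * h x)) 0
    · rw [coeff]
      simp
    · rw [fourierCoeff]
      refine integral_congr_ae ?_
      filter_upwards [(key g hg).coeFn_toLp, (key h hh).coeFn_toLp] with x h1 h2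
      rw [h1, h2]
      simp [AddCircle.liftIoc, mul_comm]

lemma sgn_mul (a b : ℝ) : sgn (a * b) = sgn a * sgn b := by
  unfold sgn
  rcases lt_trichotomy a 0 with ha | rfl | ha <;> rcases lt_trichotomy b 0 with hb | rfl | hb <;>
    simp [*, mul_pos_of_neg_of_neg, mul_neg_of_neg_of_pos, mul_neg_of_pos_of_neg, not_lt_of_gt]

lemma sgn_neg (a : ℝ) : sgn (-a) = -sgn a := by
  rw [neg_eq_neg_one_mul, sgn_mul, show sgn (-1) = -1 by norm_num [sgn], neg_one_mul]

lemma abs_sgn_le_one (a : ℝ) : |sgn a| ≤ 1 := by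
  unfold sgn
  split_ifs <;> simp

lemma measurable_sgn : Measurable sgn :=
  Measurable.ite measurableSet_Ioi measurable_const
    (Measurable.ite measurableSet_Iio measurable_const measurable_const)

/-- The square wave of period one. -/
noncomputable def squareWave (u : ℝ) : ℝ := sgn (Real.cos (2 * π * u))

lemma squareWave_add_half (u : ℝ) : squareWave (u + 1 / 2) = -squareWave u := by
  rw [squareWave, squareWave, show 2 * π * (u + 1 / 2) = 2 * π * u + π by ring, Real.cos_add_pi,
    sgn_neg]

lemma squareWave_periodic : Function.Periodic squareWave 1 := fun u => by
  rw [show u + 1 = u + 1 / 2 + 1 / 2 by ring, squareWave_add_half, squareWave_add_half, neg_neg]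

@[fun_prop]
lemma measurable_squareWave : Measurable squareWave :=
  measurable_sgn.comp (by fun_prop)

lemma abs_squareWave_le_one (u : ℝ) : |squareWave u| ≤ 1 := abs_sgn_le_one _

lemma squareWave_of_mem_Ioo {u : ℝ} (hu : u ∈ Set.Ioo (-(1 / 4) : ℝ) (1 / 4)) :
    squareWave u = 1 := by
  have : 0 < Real.cos (2 * π * u) :=
    Real.cos_pos_of_mem_Ioo ⟨by nlinarith [hu.1, pi_pos], by nlinarith [hu.2, pi_pos]⟩
  simp [squareWave, sgn, this]

lemma Φ_eq_squareWave_mul (u v : ℝ) : Φ u v = squareWave u * squareWave v := sgn_mul _ _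

lemma intervalIntegrable_of_norm_le {E : Type*} [NormedAddCommGroup E] {f : ℝ → E}
    (hf : AEStronglyMeasurable f) {C : ℝ} (hC : ∀ x, ‖f x‖ ≤ C) (a b : ℝ) :
    IntervalIntegrable f volume a b :=
  (intervalIntegrable_const (c := C)).mono_fun' hf.restrict (ae_of_all _ hC)

lemma Function.Periodic.intervalIntegral_comp_intCast_mul {E : Type*} [NormedAddCommGroup E]
    [NormedSpace ℝ E] {h : ℝ → E} (hh : Function.Periodic h 1)
    (hF_int : ∀ a b, IntervalIntegrable h volume a b) {p : ℤ} (hp : p ≠ 0) :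
    ∫ s in (0:ℝ)..1, h (p * s) = ∫ s in (0:ℝ)..1, h s := by
  have hp' : (p : ℝ) ≠ 0 := by exact_mod_cast hp
  have := hh.intervalIntegral_add_zsmul_eq p 0 hF_int
  rw [intervalIntegral.integral_comp_mul_left _ hp']
  simp only [zero_add, zsmul_eq_mul, mul_one, mul_zero] at this ⊢
  rw [this, ← Int.cast_smul_eq_zsmul ℝ, inv_smul_smul₀ hp']

lemma Function.Periodic.intervalIntegral_comp_add {E : Type*} [NormedAddCommGroup E]
    [NormedSpace ℝ E] {h : ℝ → E} (hh : Function.Periodic h 1) (a : ℝ) :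
    ∫ s in (0:ℝ)..1, h (s + a) = ∫ s in (0:ℝ)..1, h s := by
  have := hh.intervalIntegral_add_eq a 0
  simpa [add_comm] using this

/-- The primitive of a periodic function differs from its linear part by a bounded function. -/
lemma Function.Periodic.exists_abs_integral_sub_le {F : ℝ → ℝ} (hF : Function.Periodic F 1)
    (hF_int : ∀ a b, IntervalIntegrable F volume a b) :
    ∃ C, ∀ t, |(∫ s in (0:ℝ)..t, F s) - t * ∫ s in (0:ℝ)..1, F s| ≤ C := by
  set M := ∫ s in (0:ℝ)..1, F s
  have hG : Function.Periodic (fun s => F s - M) 1 := fun s => by simp [hF s]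
  have hGint : IntervalIntegrable (fun s => F s - M) volume 0 1 :=
    (hF_int 0 1).sub intervalIntegrable_const
  have hF_int' : ∀ t, ∫ s in (0:ℝ)..t, (F s - M) = (∫ s in (0:ℝ)..t, F s) - t * M := fun t => by
    rw [intervalIntegral.integral_sub (hF_int 0 t) intervalIntegrable_const]
    simp
  have hzero : ∫ s in (0:ℝ)..1, (F s - M) = 0 := by
    rw [hF_int']
    simp [M]
  have hlow := hG.sInf_add_zsmul_le_integral_of_pos hGint one_pos
  have hup := hG.integral_le_sSup_add_zsmul_of_pos hGint one_pos
  simp only [hzero, smul_zero, add_zero] at hlow hup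
  simp only [hF_int'] at hlow hup
  exact ⟨_, fun t => abs_le_max_abs_abs (hlow t) (hup t)⟩

lemma Function.Periodic.tendsto_time_average {F : ℝ → ℝ} (hF : Function.Periodic F 1)
    (hF_int : ∀ a b, IntervalIntegrable F volume a b) {c : ℝ} (hc : c ≠ 0) :
    Tendsto (fun T : ℝ => (1 / T) * ∫ t in (0:ℝ)..T, F (c * t)) atTop
      (nhds (∫ s in (0:ℝ)..1, F s)) := by
  obtain ⟨C, hC⟩ := hF.exists_abs_integral_sub_le hF_int
  rw [tendsto_iff_norm_sub_tendsto_zero]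
  have hlim : Tendsto (fun T : ℝ => C / |c| * T⁻¹) atTop (nhds 0) := by
    simpa using tendsto_inv_atTop_zero.const_mul (C / |c|)
  refine squeeze_zero' (.of_forall fun _ => norm_nonneg _) ?_ hlim
  filter_upwards [eventually_gt_atTop 0] with T hT
  have h := hC (c * T)
  rw [intervalIntegral.integral_comp_mul_left _ hc, mul_zero, Real.norm_eq_abs, smul_eq_mul]
  set I := ∫ s in (0:ℝ)..c * T, F s
  set M := ∫ s in (0:ℝ)..1, F s
  rw [show 1 / T * (c⁻¹ * I) - M = (I - c * T * M) / (c * T) by field_simp, abs_div, abs_mul,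
    abs_of_pos hT, div_mul_eq_mul_div, ← div_eq_mul_inv, div_div, mul_comm T]
  gcongr

/-- The Fourier coefficients of a dilated and translated square wave. -/
noncomputable def squareWaveCoeff (p : ℤ) (α : ℝ) (n : ℤ) : ℂ :=
  ∫ s in (0:ℝ)..1, Complex.exp (-(2 * π * Complex.I * n * s)) * (squareWave (p * s - α) : ℂ)

lemma periodic_cexp (n : ℤ) :
    Function.Periodic (fun s : ℝ => Complex.exp (-(2 * π * Complex.I * n * s))) 1 := fun s => by
  refine Complex.exp_eq_exp_iff_exists_int.2 ⟨-n, ?_⟩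
  push_cast
  ring

lemma periodic_squareWave_comp (p : ℤ) (α : ℝ) :
    Function.Periodic (fun s : ℝ => squareWave (p * s - α)) 1 := fun s => by
  have := squareWave_periodic.int_mul p (p * s - α)
  simp only [mul_one] at this
  simp only [← this]
  ring_nf

/-- The coefficient vanishes unless the index is an odd multiple of the dilation factor. -/
lemma squareWaveCoeff_eq_zero {p : ℤ} (hp : p ≠ 0) (α : ℝ) {n : ℤ}
    (hn : ∀ m, Odd m → n ≠ p * m) : squareWaveCoeff p α n = 0 := by
  have hp' : (p : ℝ) ≠ 0 := by exact_mod_cast hp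
  have hpc : (p : ℂ) ≠ 0 := by exact_mod_cast hp
  set φ : ℝ → ℂ := fun s =>
    Complex.exp (-(2 * π * Complex.I * n * s)) * (squareWave (p * s - α) : ℂ) with hφ
  have hper : Function.Periodic φ 1 := fun s => by
    have h1 := periodic_cexp n s
    have h2 := periodic_squareWave_comp p α s
    simp only at h1 h2
    simp only [hφ, h1, h2]
  set w : ℂ := Complex.exp (π * Complex.I - π * Complex.I * n / p) with hw
  have hshift : ∀ s, φ (s + 1 / (2 * p)) = w * φ s := fun s => by
    simp only [hφ, hw]
    rw [show (p : ℝ) * (s + 1 / (2 * p)) - α = p * s - α + 1 / 2 by field_simp; ring,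
      squareWave_add_half, sub_eq_add_neg (π * Complex.I : ℂ), Complex.exp_add,
      Complex.exp_pi_mul_I]
    push_cast
    rw [show -(2 * π * Complex.I * n * (s + 1 / (2 * p))) =
      -(π * Complex.I * n / p) + -(2 * π * Complex.I * n * s) by field_simp; ring, Complex.exp_add]
    ring
  have hw1 : w ≠ 1 := fun h => by
    obtain ⟨k, hk⟩ := Complex.exp_eq_one_iff.1 h
    refine hn (1 - 2 * k) ⟨-k, by ring⟩ ?_
    have hpi : (π : ℂ) * Complex.I ≠ 0 :=
      mul_ne_zero (by exact_mod_cast pi_ne_zero) Complex.I_ne_zero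
    have : (n : ℂ) = p * (1 - 2 * k) := by
      field_simp at hk
      apply mul_left_cancel₀ hpi
      linear_combination -(π * Complex.I) * hk
    exact_mod_cast this
  have h := hper.intervalIntegral_comp_add (1 / (2 * p))
  simp only [hshift, intervalIntegral.integral_const_mul] at h
  have : (w - 1) * ∫ s in (0:ℝ)..1, φ s = 0 := by linear_combination h
  exact (mul_eq_zero.1 this).resolve_left (sub_ne_zero.2 hw1)

lemma norm_cexp_mul_squareWave_le_one (n : ℤ) (s u : ℝ) :
    ‖Complex.exp (-(2 * π * Complex.I * n * s)) * (squareWave u : ℂ)‖ ≤ 1 := by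
  rw [norm_mul, show -(2 * π * Complex.I * n * s) = ((-(2 * π * n * s) : ℝ) : ℂ) * Complex.I by
    push_cast; ring, Complex.norm_exp_ofReal_mul_I, one_mul, Complex.norm_real]
  exact abs_squareWave_le_one u

lemma integral_cexp_mul_squareWave {m : ℤ} (hm : Odd m) :
    ∫ s in (0:ℝ)..1, Complex.exp (-(2 * π * Complex.I * m * s)) * (squareWave s : ℂ) =
      ((2 * Real.sin (π * m / 2) / (π * m) : ℝ) : ℂ) := by
  have hm0 : (m : ℂ) ≠ 0 := by
    rintro h
    simp [show m = 0 by exact_mod_cast h] at hm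
  have hpi : (π : ℂ) ≠ 0 := by exact_mod_cast pi_ne_zero
  set φ : ℝ → ℂ := fun s =>
    Complex.exp (-(2 * π * Complex.I * m * s)) * (squareWave s : ℂ) with hφ
  have hhalf : ∀ s, φ (s + 1 / 2) = φ s := fun s => by
    obtain ⟨k, rfl⟩ := hm
    simp only [hφ, squareWave_add_half]
    push_cast
    rw [show -(2 * π * Complex.I * (2 * k + 1) * (s + 1 / 2)) =
      -(2 * π * Complex.I * (2 * k + 1) * s) + (-π * Complex.I + (-k : ℤ) * (2 * π * Complex.I)) by
        push_cast; ring, Complex.exp_add, Complex.exp_add, Complex.exp_int_mul_two_pi_mul_I,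
      neg_mul, Complex.exp_neg (π * Complex.I), Complex.exp_pi_mul_I]
    norm_num
  have hper : Function.Periodic φ 1 := fun s => by
    rw [show s + 1 = s + 1 / 2 + 1 / 2 by ring, hhalf, hhalf]
  have hF_int : ∀ a b, IntervalIntegrable φ volume a b :=
    intervalIntegrable_of_norm_le (C := 1) (by fun_prop)
      (fun s => norm_cexp_mul_squareWave_le_one m s s)
  have hquarter : ∫ s in (-(1 / 4) : ℝ)..(1 / 4), φ s =
      ((Real.sin (π * m / 2) / (π * m) : ℝ) : ℂ) := by
    have hcongr : ∫ s in (-(1 / 4) : ℝ)..(1 / 4), φ s =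
        ∫ s in (-(1 / 4) : ℝ)..(1 / 4), Complex.exp (-(2 * π * Complex.I * m) * s) := by
      refine intervalIntegral.integral_congr_Ioo_of_le (by norm_num) fun s hs => ?_
      simp [hφ, squareWave_of_mem_Ioo hs]
    rw [hcongr, integral_exp_mul_complex
      (neg_ne_zero.2 (by simp [hm0, pi_ne_zero]))]
    push_cast
    rw [Complex.sin, show -(2 * π * Complex.I * m) * (1 / 4 : ℂ) = -(π * m / 2) * Complex.I by ring,
      show -(2 * π * Complex.I * m) * (-(1 / 4) : ℂ) = (π * m / 2) * Complex.I by ring]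
    field_simp
    rw [Complex.I_sq]
    ring
  have hshift : ∫ s in (1 / 4 : ℝ)..(3 / 4), φ s = ∫ s in (-(1 / 4) : ℝ)..(1 / 4), φ s := by
    have := intervalIntegral.integral_comp_add_right (a := -(1 / 4)) (b := 1 / 4) φ (1 / 2)
    simp only [hhalf] at this
    rw [this]
    norm_num
  have htot := hper.intervalIntegral_add_eq 0 (-(1 / 4))
  rw [zero_add, show (-(1 / 4) + 1 : ℝ) = 3 / 4 by norm_num,
    ← intervalIntegral.integral_add_adjacent_intervals (hF_int (-(1 / 4)) (1 / 4)) (hF_int _ _),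
    hshift, hquarter] at htot
  rw [htot]
  push_cast
  ring

lemma squareWaveCoeff_mul {p m : ℤ} (hp : p ≠ 0) (hm : Odd m) (α : ℝ) :
    squareWaveCoeff p α (p * m) =
      Complex.exp (-(2 * π * Complex.I * m * α)) *
        ((2 * Real.sin (π * m / 2) / (π * m) : ℝ) : ℂ) := by
  have hper : ∀ a : ℝ, Function.Periodic (fun u : ℝ =>
      Complex.exp (-(2 * π * Complex.I * m * u)) * (squareWave (u - a) : ℂ)) 1 := fun a u => by
    have h1 := periodic_cexp m u
    have h2 := squareWave_periodic.sub_const a u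
    simp only at h1 h2
    simp only [h1, h2]
  have hF_int : ∀ a b, IntervalIntegrable (fun u : ℝ =>
      Complex.exp (-(2 * π * Complex.I * m * u)) * (squareWave (u - α) : ℂ)) volume a b :=
    intervalIntegrable_of_norm_le (C := 1) (by fun_prop)
      (fun s => norm_cexp_mul_squareWave_le_one m s _)
  have h1 := (hper α).intervalIntegral_comp_intCast_mul hF_int hp
  have h2 := (hper α).intervalIntegral_comp_add α
  rw [squareWaveCoeff, ← integral_cexp_mul_squareWave hm, ← intervalIntegral.integral_const_mul]
  trans ∫ s in (0:ℝ)..1, Complex.exp (-(2 * π * Complex.I * m * ((p * s : ℝ) : ℂ))) *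
    (squareWave (p * s - α) : ℂ)
  · congr 1
    ext s
    push_cast
    ring_nf
  · rw [h1, ← h2]
    congr 1
    ext s
    rw [add_sub_cancel_right, ← mul_assoc, ← Complex.exp_add]
    push_cast
    ring_nf

lemma sin_pi_mul_odd_div_two (k : ℤ) : Real.sin (π * (2 * k + 1 : ℤ) / 2) = (-1) ^ k := by
  rw [← Real.cos_int_mul_pi, ← Real.sin_add_pi_div_two]
  push_cast
  ring_nf

lemma sin_mul_sin_of_odd {p q l : ℤ} (hp : Odd p) (hq : Odd q) (hl : Odd l) :
    Real.sin (π * (q * l : ℤ) / 2) * Real.sin (π * (p * l : ℤ) / 2) =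
      (-1 : ℝ) ^ ((p + q) / 2 + 1) := by
  obtain ⟨a, rfl⟩ := hp
  obtain ⟨b, rfl⟩ := hq
  obtain ⟨k, rfl⟩ := hl
  rw [show (2 * b + 1) * (2 * k + 1) = 2 * (b * (2 * k + 1) + k) + 1 by ring,
    show (2 * a + 1) * (2 * k + 1) = 2 * (a * (2 * k + 1) + k) + 1 by ring,
    sin_pi_mul_odd_div_two, sin_pi_mul_odd_div_two, ← zpow_add₀ (by norm_num),
    show (2 * a + 1 + (2 * b + 1)) / 2 + 1 = a + b + 2 by omega,
    show b * (2 * k + 1) + k + (a * (2 * k + 1) + k) = a + b + 2 + 2 * (k * (a + b + 1) - 1) by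
      ring, zpow_add₀ (by norm_num), zpow_mul]
  norm_num

lemma exists_odd_mul_of_coprime {p q a b : ℤ} (hcop : IsCoprime p q) (ha : Odd a)
    (h : p * a = q * b) : ∃ k : ℤ, a = q * (2 * k + 1) := by
  obtain ⟨l, rfl⟩ := hcop.symm.dvd_of_dvd_mul_left (Dvd.intro _ h.symm)
  obtain ⟨k, rfl⟩ := (Int.odd_mul.1 ha).2
  exact ⟨k, rfl⟩

lemma conj_squareWaveCoeff_mul {p q l : ℤ} (hp : Odd p) (hq : Odd q) (hl : Odd l) (α β : ℝ) :
    conj (squareWaveCoeff p α (p * (q * l))) * squareWaveCoeff q β (p * (q * l)) =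
      Complex.exp (2 * π * l * (q * α - p * β) * Complex.I) *
        (((-1 : ℝ) ^ ((p + q) / 2 + 1) * (4 / (π ^ 2 * p * q)) / l ^ 2 : ℝ) : ℂ) := by
  have hp0 : p ≠ 0 := by rintro rfl; simp at hp
  have hq0 : q ≠ 0 := by rintro rfl; simp at hq
  rw [squareWaveCoeff_mul hp0 (hq.mul hl), mul_left_comm p q l,
    squareWaveCoeff_mul hq0 (hp.mul hl), map_mul, ← Complex.exp_conj, Complex.conj_ofReal,
    mul_mul_mul_comm, ← Complex.exp_add, ← Complex.ofReal_mul, ← sin_mul_sin_of_odd hp hq hl]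
  congr 2
  · simp only [map_neg, map_mul, Complex.conj_I, Complex.conj_ofReal, map_ofNat, map_intCast]
    push_cast
    ring
  · push_cast
    field_simp
    ring

lemma memLp_squareWave_comp (p : ℤ) (α : ℝ) :
    MemLp (fun s : ℝ => (squareWave (p * s - α) : ℂ)) 2 (volume.restrict (Set.Ioc 0 1)) := by
  refine MemLp.of_bound (Measurable.aestronglyMeasurable (by fun_prop)) 1 (ae_of_all _ fun s => ?_)
  rw [Complex.norm_real]
  exact abs_squareWave_le_one _

lemma hasSum_integral_squareWave_mul {p q : ℤ} (hcop : IsCoprime p q) (hp : Odd p) (hq : Odd q)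
    (α β : ℝ) :
    HasSum (fun k : ℕ => (-1 : ℝ) ^ ((p + q) / 2 + 1) * (8 / (π ^ 2 * p * q)) *
      (Real.cos (2 * π * (2 * k + 1) * (p * β - q * α)) / (2 * k + 1) ^ 2))
      (∫ s in (0:ℝ)..1, squareWave (p * s - α) * squareWave (q * s - β)) := by
  have hp0 : p ≠ 0 := by rintro rfl; simp at hp
  have hq0 : q ≠ 0 := by rintro rfl; simp at hq
  have H := hasSum_conj_fourierIntegral_mul _ _ (memLp_squareWave_comp p α)
    (memLp_squareWave_comp q β)
  have hinj : Function.Injective (fun k : ℤ => p * (q * (2 * k + 1))) := fun k k' h => by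
    have := mul_left_cancel₀ hq0 (mul_left_cancel₀ hp0 h)
    omega
  change HasSum (fun n : ℤ => _ * squareWaveCoeff q β n) _ at H
  rw [← hinj.hasSum_iff] at H
  · have H' := Complex.hasSum_re H.nat_add_neg_add_one
    convert! H' using 1
    · ext k
      have hodd : ∀ k : ℤ, Odd (2 * k + 1) := fun k => ⟨k, rfl⟩
      have hc : ∀ k : ℤ, _ := fun k => conj_squareWaveCoeff_mul hp hq (hodd k) α β
      have hre : ∀ k : ℤ, (Complex.exp (2 * π * (2 * k + 1 : ℤ) * (q * α - p * β) * Complex.I)).re =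
          Real.cos (2 * π * (2 * k + 1) * (p * β - q * α)) := fun k => by
        rw [show (2 * π * (2 * k + 1 : ℤ) * (q * α - p * β) * Complex.I : ℂ) =
          ((-(2 * π * (2 * k + 1) * (p * β - q * α)) : ℝ) : ℂ) * Complex.I by push_cast; ring,
          Complex.exp_ofReal_mul_I_re, Real.cos_neg]
      change _ = (conj (squareWaveCoeff p α _) * squareWaveCoeff q β _ +
        conj (squareWaveCoeff p α _) * squareWaveCoeff q β _).re
      rw [hc, hc, Complex.add_re, Complex.re_mul_ofReal, Complex.re_mul_ofReal, hre, hre]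
      push_cast
      rw [show 2 * π * (2 * -((k:ℝ) + 1) + 1) * (p * β - q * α) =
        -(2 * π * (2 * k + 1) * (p * β - q * α)) by ring, Real.cos_neg,
        show (2 * -((k:ℝ) + 1) + 1) ^ 2 = (2 * k + 1) ^ 2 by ring]
      ring
    · simp only [Complex.conj_ofReal, ← Complex.ofReal_mul]
      rw [intervalIntegral.integral_ofReal, Complex.ofReal_re]
  · intro n hn
    change conj (squareWaveCoeff p α n) * squareWaveCoeff q β n = 0
    by_contra hne
    rw [mul_eq_zero, not_or, map_eq_zero] at hne
    have h1 := mt (squareWaveCoeff_eq_zero hp0 α) hne.1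
    have h2 := mt (squareWaveCoeff_eq_zero hq0 β) hne.2
    push Not at h1 h2
    obtain ⟨a, ha, rfl⟩ := h1
    obtain ⟨b, hb, hab⟩ := h2
    obtain ⟨k, rfl⟩ := exists_odd_mul_of_coprime hcop ha hab
    exact hn ⟨k, rfl⟩

theorem time_average_odd_case
    (A B : ℝ) (hA : A ≠ 0) (hB : B ≠ 0) (α β : ℝ)
    (p q : ℤ) (hcop : IsCoprime p q) (hpq : A * (q : ℝ) = B * (p : ℝ))
    (hp : Odd p) (hq : Odd q) :
    Tendsto (fun T : ℝ => (1 / T) * ∫ t in (0:ℝ)..T, Φ (A * t - α) (B * t - β))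
      atTop (nhds ((-1 : ℝ) ^ ((p + q) / 2 + 1) * (8 / (π ^ 2 * (p : ℝ) * (q : ℝ))) *
        ∑' ℓ : ℕ, Real.cos (2 * π * (2 * (ℓ : ℝ) + 1) * ((p : ℝ) * β - (q : ℝ) * α)) /
          (2 * (ℓ : ℝ) + 1) ^ 2)) := by
  have hp0 : (p : ℝ) ≠ 0 := by
    rintro h
    simp [show p = 0 by exact_mod_cast h] at hp
  rw [← tsum_mul_left, (hasSum_integral_squareWave_mul hcop hp hq α β).tsum_eq]
  have hper : Function.Periodic
      (fun s : ℝ => squareWave (p * s - α) * squareWave (q * s - β)) 1 :=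
    (periodic_squareWave_comp p α).mul (periodic_squareWave_comp q β)
  have hF_int : ∀ a b, IntervalIntegrable
      (fun s : ℝ => squareWave (p * s - α) * squareWave (q * s - β)) volume a b :=
    intervalIntegrable_of_norm_le (C := 1) (by fun_prop) fun s => by
      rw [norm_mul]
      exact mul_le_one₀ (abs_squareWave_le_one _) (norm_nonneg _) (abs_squareWave_le_one _)
  convert hper.tendsto_time_average hF_int (div_ne_zero hA hp0) using 5 with T t
  rw [Φ_eq_squareWave_mul]
  congr 3
  · field_simp
  · field_simp
    linear_combination -t * hpq
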